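/- A Minkowski space has strictly convex norm if and only if every b-convex body that is not b-bounded is a closed ball of radius 1. -/

import Mathlib

open Metric Set

/-- The ball hull of `S`: intersection of all closed balls of radius 1 containing `S`. -/
def ballHull {E : Type*} [NormedAddCommGroup E] (S : Set E) : Set E :=
  ⋂ x ∈ {x : E | S ⊆ closedBall x 1}, closedBall x 1

/-- The circumradius of `S`: the least `r ≥ 0` such that `S` is contained in some
closed ball of radius `r`. -/
noncomputable def circumradius {E : Type*} [NormedAddCommGroup E] (S : Set E) : ℝ :=
  sInf {r : ℝ | 0 ≤ r ∧ ∃ x : E, S ⊆ closedBall x r}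

/-- A b-convex body: a bounded nonempty set equal to its ball hull. -/
def IsBConvexBody {E : Type*} [NormedAddCommGroup E] (K : Set E) : Prop :=
  Bornology.IsBounded K ∧ K.Nonempty ∧ ballHull K = K

/-- `F` is an exposed b-face of `K`: `F = K ∩ S(y,1)` for some supporting sphere `S(y,1)`. -/
def IsExposedBFace {E : Type*} [NormedAddCommGroup E] (K F : Set E) : Prop :=
  ∃ y : E, K ⊆ closedBall y 1 ∧ (K ∩ sphere y 1).Nonempty ∧ F = K ∩ sphere y 1

/-- The set of b-exposed points of `K`. -/
def bExp {E : Type*} [NormedAddCommGroup E] (K : Set E) : Set E :=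
  {x : E | ∃ y : E, K ⊆ closedBall y 1 ∧ K ∩ sphere y 1 = {x}}

/-! Two distinct closed balls of the same radius `r` meet in a lens. If the norm is strictly convex,
every point of the lens is at distance less than `r` from the midpoint of the centers, so a compact
set inside the lens has circumradius less than `r`. Hence a b-convex body that is not b-bounded
lies in exactly one unit ball, and its ball hull is that ball. If the norm is not strictly convex,
there are unit vectors `a ≠ b` with `‖a + b‖ = 2`. The lens of the unit balls about `a` and `b` then
contains `0` and `a + b`, which are at distance `2`, so it is not b-bounded. It is not a unit ball,
because a closed ball contains no other closed ball of the same radius.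
-/

section NormedGroup

variable {E : Type*} [NormedAddCommGroup E] {S C : Set E} {x y z : E} {r : ℝ}

theorem mem_ballHull : z ∈ ballHull S ↔ ∀ x, S ⊆ closedBall x 1 → z ∈ closedBall x 1 :=
  mem_iInter₂

theorem subset_ballHull (S : Set E) : S ⊆ ballHull S :=
  subset_iInter₂ fun _ hx => hx

theorem ballHull_subset_closedBall (h : S ⊆ closedBall x 1) : ballHull S ⊆ closedBall x 1 :=
  biInter_subset_of_mem h

theorem isClosed_ballHull (S : Set E) : IsClosed (ballHull S) :=
  isClosed_biInter fun _ _ => isClosed_closedBall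

theorem ballHull_eq_univ (h : ∀ x, ¬ S ⊆ closedBall x 1) : ballHull S = univ :=
  eq_univ_of_forall fun _ => mem_ballHull.2 fun x hx => absurd hx (h x)

theorem ballHull_eq_closedBall (h : S ⊆ closedBall x 1)
    (huniq : ∀ y, S ⊆ closedBall y 1 → y = x) : ballHull S = closedBall x 1 :=
  (ballHull_subset_closedBall h).antisymm <|
    subset_iInter₂ fun y hy => (huniq y hy).symm ▸ Subset.rfl

theorem ballHull_biInter_closedBall (C : Set E) :
    ballHull (⋂ x ∈ C, closedBall x 1) = ⋂ x ∈ C, closedBall x 1 := by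
  refine Subset.antisymm (subset_iInter₂ fun x hx => ?_) (subset_ballHull _)
  exact ballHull_subset_closedBall (biInter_subset_of_mem hx)

theorem isBConvexBody_biInter_closedBall (hC : C.Nonempty)
    (hne : (⋂ x ∈ C, closedBall x 1).Nonempty) : IsBConvexBody (⋂ x ∈ C, closedBall x 1) := by
  obtain ⟨x, hx⟩ := hC
  exact ⟨isBounded_closedBall.subset (biInter_subset_of_mem hx), hne, ballHull_biInter_closedBall C⟩

theorem isBConvexBody_inter_closedBall (hne : (closedBall x 1 ∩ closedBall y 1).Nonempty) :
    IsBConvexBody (closedBall x 1 ∩ closedBall y 1) := by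
  rw [← biInter_pair x y fun c => closedBall c 1] at hne ⊢
  exact isBConvexBody_biInter_closedBall (insert_nonempty x {y}) hne

theorem IsBConvexBody.isCompact [ProperSpace E] (hS : IsBConvexBody S) : IsCompact S := by
  obtain ⟨hbdd, -, hhull⟩ := hS
  exact isCompact_of_isClosed_isBounded (hhull ▸ isClosed_ballHull S) hbdd

theorem circumradius_le (hr : 0 ≤ r) (h : S ⊆ closedBall x r) : circumradius S ≤ r :=
  csInf_le ⟨0, fun _ ht => ht.1⟩ ⟨hr, x, h⟩

theorem diam_le_two_mul_circumradius (hS : Bornology.IsBounded S) :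
    diam S ≤ 2 * circumradius S := by
  obtain ⟨R, hR, hSR⟩ := hS.subset_closedBall_lt 0 0
  suffices diam S / 2 ≤ circumradius S by linarith
  refine le_csInf ⟨R, hR.le, 0, hSR⟩ ?_
  rintro r ⟨hr, x, hSx⟩
  have hdiam : diam S ≤ 2 * r :=
    (diam_mono hSx isBounded_closedBall).trans (diam_closedBall hr)
  linarith

theorem le_circumradius_inter_closedBall {a b : E} (ha : ‖a‖ ≤ r) (hb : ‖b‖ ≤ r)
    (hab : 2 * r ≤ ‖a + b‖) : r ≤ circumradius (closedBall a r ∩ closedBall b r) := by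
  have hbdd : Bornology.IsBounded (closedBall a r ∩ closedBall b r) :=
    isBounded_closedBall.subset inter_subset_left
  have hzero : 0 ∈ closedBall a r ∩ closedBall b r := by simp [ha, hb]
  have hadd : a + b ∈ closedBall a r ∩ closedBall b r := by simp [ha, hb]
  have hdist : 2 * r ≤ 2 * circumradius (closedBall a r ∩ closedBall b r) :=
    calc 2 * r ≤ dist (a + b) 0 := by rwa [dist_zero_right]
      _ ≤ diam (closedBall a r ∩ closedBall b r) := dist_le_diam_of_mem hbdd hadd hzero
      _ ≤ _ := diam_le_two_mul_circumradius hbdd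
  linarith

end NormedGroup

section NormedSpace

variable {E : Type*} [NormedAddCommGroup E] [NormedSpace ℝ E] {K : Set E} {x y : E} {r s : ℝ}

theorem dist_add_le_of_closedBall_subset_closedBall (hr : 0 ≤ r) (hxy : x ≠ y)
    (h : closedBall x r ⊆ closedBall y s) : dist x y + r ≤ s := by
  have hpos : 0 < ‖x - y‖ := norm_sub_pos_iff.2 hxy
  -- the point of the first ball farthest from `y`
  have hfar : x + (r / ‖x - y‖) • (x - y) ∈ closedBall x r := by
    rw [mem_closedBall, dist_self_add_left, norm_smul_of_nonneg (by positivity),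
      div_mul_cancel₀ r hpos.ne']
  calc dist x y + r = (1 + r / ‖x - y‖) * ‖x - y‖ := by
        rw [dist_eq_norm, add_mul, one_mul, div_mul_cancel₀ r hpos.ne']
    _ = dist (x + (r / ‖x - y‖) • (x - y)) y := by
        rw [← norm_smul_of_nonneg (by positivity), dist_eq_norm]
        congr 1
        module
    _ ≤ s := h hfar

theorem eq_of_closedBall_subset_closedBall (hr : 0 ≤ r)
    (h : closedBall x r ⊆ closedBall y r) : x = y := by
  by_contra hxy
  have hle : dist x y + r ≤ r := dist_add_le_of_closedBall_subset_closedBall hr hxy h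
  linarith [dist_pos.2 hxy]

theorem IsBConvexBody.exists_subset_closedBall [Nontrivial E] (hK : IsBConvexBody K) :
    ∃ x, K ⊆ closedBall x 1 := by
  obtain ⟨hbdd, -, hhull⟩ := hK
  by_contra! hnone
  have huniv : K = univ := hhull.symm.trans (ballHull_eq_univ hnone)
  exact NormedSpace.unbounded_univ ℝ E (huniv ▸ hbdd)

theorem circumradius_lt_of_subset_closedBall_of_ne [StrictConvexSpace ℝ E] (hK : IsCompact K)
    (hne : K.Nonempty) (hx : K ⊆ closedBall x r) (hy : K ⊆ closedBall y r) (hxy : x ≠ y) :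
    circumradius K < r := by
  obtain ⟨p, hpK, hmax⟩ := hK.exists_isMaxOn hne
    (continuous_id.dist (continuous_const (y := midpoint ℝ x y))).continuousOn
  have hmid : midpoint ℝ x y ∈ ball p r :=
    openSegment_subset_ball_of_ne (mem_closedBall_comm.1 (hx hpK)) (mem_closedBall_comm.1 (hy hpK))
      hxy (midpoint_mem_openSegment x y)
  calc circumradius K ≤ dist p (midpoint ℝ x y) := circumradius_le dist_nonneg hmax
    _ < r := mem_ball'.1 hmid

theorem IsBConvexBody.exists_eq_closedBall [StrictConvexSpace ℝ E] [ProperSpace E] [Nontrivial E]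
    (hK : IsBConvexBody K) (hrad : ¬ circumradius K < 1) : ∃ x, K = closedBall x 1 := by
  obtain ⟨x, hx⟩ := hK.exists_subset_closedBall
  have huniq : ∀ y, K ⊆ closedBall y 1 → y = x := fun y hy => by
    by_contra hyx
    exact hrad (circumradius_lt_of_subset_closedBall_of_ne hK.isCompact hK.2.1 hy hx hyx)
  exact ⟨x, hK.2.2.symm.trans (ballHull_eq_closedBall hx huniq)⟩

theorem eq_of_inter_closedBall_eq_closedBall {c : E} (hr : 0 ≤ r)
    (h : closedBall x r ∩ closedBall y r = closedBall c r) : x = y :=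
  have hcx : c = x := eq_of_closedBall_subset_closedBall hr (h ▸ inter_subset_left)
  have hcy : c = y := eq_of_closedBall_subset_closedBall hr (h ▸ inter_subset_right)
  hcx.symm.trans hcy

end NormedSpace

theorem stmt_9 {E : Type*} [NormedAddCommGroup E] [NormedSpace ℝ E]
    [FiniteDimensional ℝ E] [Nontrivial E] :
    StrictConvexSpace ℝ E ↔
      ∀ K : Set E, IsBConvexBody K → ¬ circumradius K < 1 →
        ∃ x : E, K = closedBall x 1 := by
  refine ⟨fun _ K hK hrad => hK.exists_eq_closedBall hrad, fun H => ?_⟩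
  refine .of_norm_add_ne_two fun a b ha hb hab hsum => ?_
  have hbody : IsBConvexBody (closedBall a 1 ∩ closedBall b 1) :=
    isBConvexBody_inter_closedBall ⟨0, by simp [ha, hb]⟩
  have hrad : 1 ≤ circumradius (closedBall a 1 ∩ closedBall b 1) :=
    le_circumradius_inter_closedBall ha.le hb.le (by rw [hsum, mul_one])
  obtain ⟨c, hc⟩ := H _ hbody hrad.not_gt
  exact hab (eq_of_inter_closedBall_eq_closedBall zero_le_one hc)
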